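/- arXiv:2507.10821 — 7 statements merged into one kernel-verified Lean document; each statement's English description precedes it below -/
import Mathlib

section
/- Let N ≥ 1 and set n = N+1. Let 𝓛 : ℂ^(2n) → ℂ^(2n) be a bijective linear map satisfying ⟨P₋ 𝓛x, 𝓛y⟩ = ⟨P₊ x, y⟩ for all x, y ∈ ℂ^(2n). Then the graph X = {(x, 𝓛x) : x ∈ ℂ^(2n)} is ρ-self-orthogonal, i.e. X = X^{⊥ρ} where X^{⊥ρ} = {(x,y) : ρ((x,y),(x̃,ỹ)) = 0 for all (x̃,ỹ) ∈ X}. -/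
open scoped BigOperators

/-- The standard Hermitian inner product on `ι → ℂ`, linear in the first argument and
conjugate-linear in the second. -/
noncomputable def herm {ι : Type*} [Fintype ι] (x y : ι → ℂ) : ℂ :=
  ∑ i, x i * (starRingEnd ℂ) (y i)

/-- The block-diagonal matrix `P₊` consisting of `n = N+1` copies of
`P₀ = [[0,1],[-1,0]]` on the diagonal; indices modelled as `Fin (N+1) × Fin 2`. -/
noncomputable def Pplus (N : ℕ) : Matrix (Fin (N + 1) × Fin 2) (Fin (N + 1) × Fin 2) ℂ :=
  fun p q =>
    if p.1 = q.1 then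
      (if p.2 = 0 ∧ q.2 = 1 then 1 else if p.2 = 1 ∧ q.2 = 0 then -1 else 0)
    else 0

/-- `P₋ = (1/(N+1)) • P₊`. -/
noncomputable def Pminus (N : ℕ) : Matrix (Fin (N + 1) × Fin 2) (Fin (N + 1) × Fin 2) ℂ :=
  (((N : ℂ) + 1)⁻¹) • Pplus N

/-- The sesquilinear form `ρ((x,y),(x̃,ỹ)) = (x|x̃)₊ − (y|ỹ)₋`. -/
noncomputable def rhoForm (N : ℕ)
    (p q : (Fin (N + 1) × Fin 2 → ℂ) × (Fin (N + 1) × Fin 2 → ℂ)) : ℂ :=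
  herm ((Pplus N).mulVec p.1) q.1 - herm ((Pminus N).mulVec p.2) q.2

open scoped Kronecker
open Function Matrix

/-- Injectivity of `B₂`, viewed as a map `W → (W → R)`, encodes nondegeneracy in its first
argument. -/
theorem graph_of_unitary_is_selfOrthogonal_general {V W R : Type*} [AddGroup R]
    {B₁ : V → V → R} {B₂ : W → W → R} (hB₂ : Injective B₂) {f : V → W} (hf : Surjective f)
    (hB : ∀ x y, B₂ (f x) (f y) = B₁ x y) :
    {p : V × W | p.2 = f p.1} =
      {p : V × W | ∀ q ∈ {q : V × W | q.2 = f q.1}, B₁ p.1 q.1 - B₂ p.2 q.2 = 0} := by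
  ext ⟨x, y⟩
  calc y = f x
    _ ↔ B₂ y = B₂ (f x) := hB₂.eq_iff.symm
    _ ↔ ∀ z, B₂ y (f z) = B₂ (f x) (f z) := by rw [funext_iff, hf.forall]
    _ ↔ ∀ q ∈ {q : V × W | q.2 = f q.1}, B₁ x q.1 - B₂ y q.2 = 0 := by
      simp [hB, sub_eq_zero, eq_comm]

theorem herm_injective {ι : Type*} [Fintype ι] :
    Injective (herm : (ι → ℂ) → (ι → ℂ) → ℂ) := fun u v h =>
  dotProduct_eq u v fun w => by simpa [herm, dotProduct] using congrFun h (star w)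

theorem Pplus_eq_one_kronecker (N : ℕ) :
    Pplus N = (1 : Matrix (Fin (N + 1)) (Fin (N + 1)) ℂ) ⊗ₖ !![0, 1; -1, 0] := by
  ext ⟨i, j⟩ ⟨k, l⟩
  by_cases h : i = k <;> fin_cases j <;> fin_cases l <;> simp [Pplus, h]

theorem det_Pplus (N : ℕ) : (Pplus N).det = 1 := by
  simp [Pplus_eq_one_kronecker, det_kronecker, det_fin_two]

theorem isUnit_Pminus (N : ℕ) : IsUnit (Pminus N) := by
  have hc : (N : ℂ) + 1 ≠ 0 := Nat.cast_add_one_ne_zero N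
  rw [isUnit_iff_isUnit_det, Pminus, det_smul, det_Pplus, mul_one]
  exact (inv_ne_zero hc).isUnit.pow _

/-- If `𝓛 : ℂ^(2n) → ℂ^(2n)` (with `n = N+1`) is a bijective linear map
satisfying `⟨P₋ 𝓛x, 𝓛y⟩ = ⟨P₊ x, y⟩` for all `x, y`, then its graph
`X = {(x, 𝓛x)}` is `ρ`-self-orthogonal: `X = X^{⊥ρ}`. -/
theorem graph_of_unitary_is_selfOrthogonal (N : ℕ) (hN : 1 ≤ N)
    (𝓛 : (Fin (N + 1) × Fin 2 → ℂ) →ₗ[ℂ] (Fin (N + 1) × Fin 2 → ℂ))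
    (hbij : Function.Bijective 𝓛)
    (huni : ∀ x y : Fin (N + 1) × Fin 2 → ℂ,
      herm ((Pminus N).mulVec (𝓛 x)) (𝓛 y) = herm ((Pplus N).mulVec x) y) :
    {p : (Fin (N + 1) × Fin 2 → ℂ) × (Fin (N + 1) × Fin 2 → ℂ) | p.2 = 𝓛 p.1}
      = {p : (Fin (N + 1) × Fin 2 → ℂ) × (Fin (N + 1) × Fin 2 → ℂ) |
          ∀ q ∈ {p : (Fin (N + 1) × Fin 2 → ℂ) × (Fin (N + 1) × Fin 2 → ℂ) | p.2 = 𝓛 p.1},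
            rhoForm N p q = 0} :=
  graph_of_unitary_is_selfOrthogonal_general
    (herm_injective.comp (mulVec_injective_of_isUnit (isUnit_Pminus N))) hbij.surjective huni
end

section
/- Let L > 0 and N ≥ 1. Let φ, φ̃ : [−L,L] → ℂ be twice continuously differentiable, and for each j = 1,…,N let ψⱼ, ψ̃ⱼ : [L,∞) → ℂ be twice continuously differentiable with ψⱼ(x), ψⱼ'(x), ψ̃ⱼ(x), ψ̃ⱼ'(x) → 0 as x → ∞ and with ψⱼ''·conj(ψ̃ⱼ) and ψⱼ·conj(ψ̃ⱼ'') integrable on (L,∞). Then ∫_{−L}^{L} [(−φ'')·conj(φ̃) − φ·conj(−φ̃'')] dx + Σ_{j=1}^{N} ∫_{L}^{∞} [(−ψⱼ'')·conj(ψ̃ⱼ) − ψⱼ·conj(−ψ̃ⱼ'')] dx = ⟨P₊ u, ũ⟩ − ⟨P₋ v, ṽ⟩, where u = (φ(−L), φ'(−L), ψ₁(L), ψ₁'(L), …, ψ_N(L), ψ_N'(L)) ∈ ℂ^(2(N+1)), ũ is defined analogously from φ̃, ψ̃ⱼ, v = (φ(L), φ'(L), φ(L), φ'(L), …, φ(L),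 φ'(L)) consists of N+1 copies of (φ(L), φ'(L)), and ṽ is defined analogously from φ̃. -/
/-!
The difference `-f'' · conj g - f · conj (-g'')` is the derivative of the sesquilinear Wronskian
`W = f · conj g' - f' · conj g`, so each edge contributes boundary values only: `W(L) - W(-L)` from
the loop and `-W(L)` from each half-line. On the other side, `⟨P₊ x, y⟩` is the sum over the `N + 1`
blocks of `x₁ conj y₀ - x₀ conj y₁`, that is, minus the sum of the Wronskians at the edge ends
recorded in `u`; the `N + 1` identical blocks of `v` are averaged to one by the factor `1 / (N + 1)`
in `P₋`.
-/

open scoped BigOperators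
open MeasureTheory Set Filter

/-- The boundary vector `u = (φ(−L), φ'(−L), ψ₁(L), ψ₁'(L), …, ψ_N(L), ψ_N'(L))`. -/
noncomputable def bdryU {N : ℕ} (L : ℝ) (φ φd : ℝ → ℂ) (ψ ψd : Fin N → ℝ → ℂ) :
    Fin (N + 1) × Fin 2 → ℂ := fun p =>
  Fin.cases (motive := fun _ => Fin 2 → ℂ)
    (fun a => if a = 0 then φ (-L) else φd (-L))
    (fun k a => if a = 0 then ψ k L else ψd k L) p.1 p.2

/-- The boundary vector `v` consisting of `N+1` copies of `(φ(L), φ'(L))`. -/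
noncomputable def bdryV {N : ℕ} (L : ℝ) (φ φd : ℝ → ℂ) :
    Fin (N + 1) × Fin 2 → ℂ := fun p => if p.2 = 0 then φ L else φd L

section Lagrange

/-- The sesquilinear Wronskian of `f` and `g`, whose values at the ends of an edge are the boundary
terms of Green's identity. The derivatives are passed as the functions `f'` and `g'`, so that
one-sided derivatives can be used at an endpoint. -/
def starWronskian {A : Type*} [Ring A] [Star A] (f f' g g' : ℝ → A) (x : ℝ) : A :=
  f x * star (g' x) - f' x * star (g x)

/-- The integrand of `[-Δf, g] - [f, -Δg]` on one edge, with the second derivatives passed as the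
functions `f''` and `g''`. -/
def greenDensity {A : Type*} [Ring A] [Star A] (f f'' g g'' : ℝ → A) (x : ℝ) : A :=
  -f'' x * star (g x) - f x * star (-g'' x)

variable {A : Type*} [NormedRing A] [StarRing A] {a b : ℝ} {f f' f'' g g' g'' : ℝ → A}

lemma integrableOn_greenDensity {s : Set ℝ}
    (h₁ : IntegrableOn (fun x => f'' x * star (g x)) s)
    (h₂ : IntegrableOn (fun x => f x * star (g'' x)) s) :
    IntegrableOn (greenDensity f f'' g g'') s := by
  have h_eq : greenDensity f f'' g g'' =
      -(fun x => f'' x * star (g x)) + fun x => f x * star (g'' x) := by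
    ext x
    simp [greenDensity]
  exact h_eq ▸ h₁.neg.add h₂

variable [ContinuousStar A]

lemma tendsto_starWronskian {l : Filter ℝ} {u u' v v' : A}
    (hf : Tendsto f l (nhds u)) (hf' : Tendsto f' l (nhds u'))
    (hg : Tendsto g l (nhds v)) (hg' : Tendsto g' l (nhds v')) :
    Tendsto (starWronskian f f' g g') l (nhds (u * star v' - u' * star v)) :=
  (hf.mul hg'.star).sub (hf'.mul hg.star)

lemma continuousOn_greenDensity {s : Set ℝ} (hf : ContinuousOn f s) (hf'' : ContinuousOn f'' s)
    (hg : ContinuousOn g s) (hg'' : ContinuousOn g'' s) :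
    ContinuousOn (greenDensity f f'' g g'') s :=
  (hf''.neg.mul hg.star).sub (hf.mul hg''.neg.star)

variable [NormedAlgebra ℝ A] [StarModule ℝ A]

lemma hasDerivWithinAt_starWronskian {s : Set ℝ} {x : ℝ}
    (hf : HasDerivWithinAt f (f' x) s x) (hf' : HasDerivWithinAt f' (f'' x) s x)
    (hg : HasDerivWithinAt g (g' x) s x) (hg' : HasDerivWithinAt g' (g'' x) s x) :
    HasDerivWithinAt (starWronskian f f' g g') (greenDensity f f'' g g'' x) s x := by
  refine ((hf.mul hg'.star).sub (hf'.mul hg.star)).congr_deriv ?_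
  simp only [greenDensity, star_neg]
  noncomm_ring

variable [CompleteSpace A]

theorem integral_greenDensity_of_le (hab : a ≤ b)
    (hf : ∀ x ∈ Icc a b, HasDerivWithinAt f (f' x) (Icc a b) x)
    (hf' : ∀ x ∈ Icc a b, HasDerivWithinAt f' (f'' x) (Icc a b) x)
    (hg : ∀ x ∈ Icc a b, HasDerivWithinAt g (g' x) (Icc a b) x)
    (hg' : ∀ x ∈ Icc a b, HasDerivWithinAt g' (g'' x) (Icc a b) x)
    (hint : IntervalIntegrable (greenDensity f f'' g g'') volume a b) :
    ∫ x in a..b, greenDensity f f'' g g'' x =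
      starWronskian f f' g g' b - starWronskian f f' g g' a := by
  have hW := fun x hx => hasDerivWithinAt_starWronskian (hf x hx) (hf' x hx) (hg x hx) (hg' x hx)
  exact intervalIntegral.integral_eq_sub_of_hasDerivAt_of_le hab
    (fun x hx => (hW x hx).continuousWithinAt)
    (fun x hx => (hW x (Ioo_subset_Icc_self hx)).hasDerivAt (Icc_mem_nhds hx.1 hx.2)) hint

theorem integral_Ioi_greenDensity {w : A}
    (hf : ∀ x ∈ Ici a, HasDerivWithinAt f (f' x) (Ici a) x)
    (hf' : ∀ x ∈ Ici a, HasDerivWithinAt f' (f'' x) (Ici a) x)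
    (hg : ∀ x ∈ Ici a, HasDerivWithinAt g (g' x) (Ici a) x)
    (hg' : ∀ x ∈ Ici a, HasDerivWithinAt g' (g'' x) (Ici a) x)
    (hlim : Tendsto (starWronskian f f' g g') atTop (nhds w))
    (hint : IntegrableOn (greenDensity f f'' g g'') (Ioi a)) :
    ∫ x in Ioi a, greenDensity f f'' g g'' x = w - starWronskian f f' g g' a := by
  have hW := fun x hx => hasDerivWithinAt_starWronskian (hf x hx) (hf' x hx) (hg x hx) (hg' x hx)
  exact integral_Ioi_of_hasDerivAt_of_tendsto (hW a self_mem_Ici).continuousWithinAt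
    (fun x hx => (hW x (Ioi_subset_Ici_self hx)).hasDerivAt (Ici_mem_nhds hx)) hint hlim

end Lagrange

section Boundary

variable {N : ℕ}

lemma herm_smul_left {ι : Type*} [Fintype ι] (c : ℂ) (x y : ι → ℂ) :
    herm (c • x) y = c * herm x y := by
  simp only [herm, Pi.smul_apply, smul_eq_mul, Finset.mul_sum, mul_assoc]

lemma Pplus_mulVec_zero (x : Fin (N + 1) × Fin 2 → ℂ) (i : Fin (N + 1)) :
    (Pplus N).mulVec x (i, 0) = x (i, 1) := by
  simp [Matrix.mulVec, dotProduct, Pplus, Fintype.sum_prod_type]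

lemma Pplus_mulVec_one (x : Fin (N + 1) × Fin 2 → ℂ) (i : Fin (N + 1)) :
    (Pplus N).mulVec x (i, 1) = -x (i, 0) := by
  simp [Matrix.mulVec, dotProduct, Pplus, Fintype.sum_prod_type]

lemma herm_Pplus_mulVec (x y : Fin (N + 1) × Fin 2 → ℂ) :
    herm ((Pplus N).mulVec x) y =
      -∑ i, (x (i, 0) * star (y (i, 1)) - x (i, 1) * star (y (i, 0))) := by
  simp only [herm, Fintype.sum_prod_type, Fin.sum_univ_two, Pplus_mulVec_zero, Pplus_mulVec_one,
    starRingEnd_apply, ← Finset.sum_neg_distrib]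
  exact Finset.sum_congr rfl fun i _ => by ring

lemma herm_Pplus_mulVec_bdryU (L : ℝ) (φ φ' χ χ' : ℝ → ℂ) (ψ ψ' η η' : Fin N → ℝ → ℂ) :
    herm ((Pplus N).mulVec (bdryU L φ φ' ψ ψ')) (bdryU L χ χ' η η') =
      -(starWronskian φ φ' χ χ' (-L) + ∑ j, starWronskian (ψ j) (ψ' j) (η j) (η' j) L) := by
  rw [herm_Pplus_mulVec, Fin.sum_univ_succ]
  rfl

lemma herm_Pminus_mulVec_bdryV (L : ℝ) (φ φ' χ χ' : ℝ → ℂ) :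
    herm ((Pminus N).mulVec (bdryV L φ φ')) (bdryV L χ χ') = -starWronskian φ φ' χ χ' L := by
  have h_blocks : herm ((Pplus N).mulVec (bdryV L φ φ')) (bdryV L χ χ') =
      ((N : ℂ) + 1) * -starWronskian φ φ' χ χ' L := by
    simp [herm_Pplus_mulVec, bdryV, starWronskian, mul_sub]
  rw [Pminus, Matrix.smul_mulVec, herm_smul_left, h_blocks,
    inv_mul_cancel_left₀ (Nat.cast_add_one_ne_zero N)]

end Boundary

theorem green_identity_looping_edge_general {L : ℝ} (hL : 0 ≤ L) {N : ℕ}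
    {φ φd φdd φt φtd φtdd : ℝ → ℂ} {ψ ψd ψdd ψt ψtd ψtdd : Fin N → ℝ → ℂ}
    (hφ : ∀ x ∈ Icc (-L) L, HasDerivWithinAt φ (φd x) (Icc (-L) L) x)
    (hφd : ∀ x ∈ Icc (-L) L, HasDerivWithinAt φd (φdd x) (Icc (-L) L) x)
    (hφt : ∀ x ∈ Icc (-L) L, HasDerivWithinAt φt (φtd x) (Icc (-L) L) x)
    (hφtd : ∀ x ∈ Icc (-L) L, HasDerivWithinAt φtd (φtdd x) (Icc (-L) L) x)
    (hφint : IntervalIntegrable (greenDensity φ φdd φt φtdd) volume (-L) L)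
    (hψ : ∀ j, ∀ x ∈ Ici L, HasDerivWithinAt (ψ j) (ψd j x) (Ici L) x)
    (hψd : ∀ j, ∀ x ∈ Ici L, HasDerivWithinAt (ψd j) (ψdd j x) (Ici L) x)
    (hψt : ∀ j, ∀ x ∈ Ici L, HasDerivWithinAt (ψt j) (ψtd j x) (Ici L) x)
    (hψtd : ∀ j, ∀ x ∈ Ici L, HasDerivWithinAt (ψtd j) (ψtdd j x) (Ici L) x)
    (hlim : ∀ j, Tendsto (starWronskian (ψ j) (ψd j) (ψt j) (ψtd j)) atTop (nhds 0))
    (hψint : ∀ j, IntegrableOn (greenDensity (ψ j) (ψdd j) (ψt j) (ψtdd j)) (Ioi L)) :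
    (∫ x in (-L)..L, greenDensity φ φdd φt φtdd x)
      + ∑ j : Fin N, ∫ x in Ioi L, greenDensity (ψ j) (ψdd j) (ψt j) (ψtdd j) x
      = herm ((Pplus N).mulVec (bdryU L φ φd ψ ψd)) (bdryU L φt φtd ψt ψtd)
        - herm ((Pminus N).mulVec (bdryV L φ φd)) (bdryV L φt φtd) := by
  have h_loop := integral_greenDensity_of_le (neg_le_self hL) hφ hφd hφt hφtd hφint
  have h_halfLine := fun j =>
    integral_Ioi_greenDensity (hψ j) (hψd j) (hψt j) (hψtd j) (hlim j) (hψint j)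
  simp only [h_loop, h_halfLine, herm_Pplus_mulVec_bdryU, herm_Pminus_mulVec_bdryV, zero_sub,
    Finset.sum_neg_distrib]
  ring

/-- The Green-type identity for the free Laplacian on a looping-edge
graph (loop `[−L,L]`, `N` half-lines `[L,∞)`):
`[−ΔU, V] − [U, −ΔV] = ⟨P₊ u, ũ⟩ − ⟨P₋ v, ṽ⟩`. -/
theorem green_identity_looping_edge (L : ℝ) (hL : 0 < L) (N : ℕ) (hN : 1 ≤ N)
    (φ φd φdd φt φtd φtdd : ℝ → ℂ)
    (ψ ψd ψdd ψt ψtd ψtdd : Fin N → ℝ → ℂ)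
    -- φ, φ̃ twice continuously differentiable on [−L, L]
    (hφ : ∀ x ∈ Icc (-L) L, HasDerivWithinAt φ (φd x) (Icc (-L) L) x)
    (hφd : ∀ x ∈ Icc (-L) L, HasDerivWithinAt φd (φdd x) (Icc (-L) L) x)
    (hφdd : ContinuousOn φdd (Icc (-L) L))
    (hφt : ∀ x ∈ Icc (-L) L, HasDerivWithinAt φt (φtd x) (Icc (-L) L) x)
    (hφtd : ∀ x ∈ Icc (-L) L, HasDerivWithinAt φtd (φtdd x) (Icc (-L) L) x)
    (hφtdd : ContinuousOn φtdd (Icc (-L) L))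
    -- ψⱼ, ψ̃ⱼ twice continuously differentiable on [L, ∞)
    (hψ : ∀ j, ∀ x ∈ Ici L, HasDerivWithinAt (ψ j) (ψd j x) (Ici L) x)
    (hψd : ∀ j, ∀ x ∈ Ici L, HasDerivWithinAt (ψd j) (ψdd j x) (Ici L) x)
    (hψdd : ∀ j, ContinuousOn (ψdd j) (Ici L))
    (hψt : ∀ j, ∀ x ∈ Ici L, HasDerivWithinAt (ψt j) (ψtd j x) (Ici L) x)
    (hψtd : ∀ j, ∀ x ∈ Ici L, HasDerivWithinAt (ψtd j) (ψtdd j x) (Ici L) x)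
    (hψtdd : ∀ j, ContinuousOn (ψtdd j) (Ici L))
    -- decay at infinity
    (hdec1 : ∀ j, Tendsto (ψ j) atTop (nhds 0))
    (hdec2 : ∀ j, Tendsto (ψd j) atTop (nhds 0))
    (hdec3 : ∀ j, Tendsto (ψt j) atTop (nhds 0))
    (hdec4 : ∀ j, Tendsto (ψtd j) atTop (nhds 0))
    -- integrability on (L, ∞)
    (hint1 : ∀ j, IntegrableOn (fun x => ψdd j x * (starRingEnd ℂ) (ψt j x)) (Ioi L))
    (hint2 : ∀ j, IntegrableOn (fun x => ψ j x * (starRingEnd ℂ) (ψtdd j x)) (Ioi L)) :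
    (∫ x in (-L)..L,
        ((-φdd x) * (starRingEnd ℂ) (φt x) - φ x * (starRingEnd ℂ) (-(φtdd x))))
      + ∑ j : Fin N, ∫ x in Ioi L,
          ((-(ψdd j x)) * (starRingEnd ℂ) (ψt j x)
            - ψ j x * (starRingEnd ℂ) (-(ψtdd j x)))
      = herm ((Pplus N).mulVec (bdryU L φ φd ψ ψd)) (bdryU L φt φtd ψt ψtd)
        - herm ((Pminus N).mulVec (bdryV L φ φd)) (bdryV L φt φtd) := by
  have hφcont := continuousOn_greenDensity (HasDerivWithinAt.continuousOn hφ) hφdd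
    (HasDerivWithinAt.continuousOn hφt) hφtdd
  have hlim := fun j => tendsto_starWronskian (hdec1 j) (hdec2 j) (hdec3 j) (hdec4 j)
  simp only [star_zero, mul_zero, sub_zero] at hlim
  exact green_identity_looping_edge_general hL.le hφ hφd hφt hφtd
    (hφcont.intervalIntegrable_of_Icc (neg_le_self hL.le)) hψ hψd hψt hψtd hlim
    fun j => integrableOn_greenDensity (hint1 j) (hint2 j)
end

section
/- Let N ≥ 1 and let m_{ij} ∈ ℝ for i,j ∈ {1,…,N+1} satisfy m_{ij} = m_{ji}. Define the real 2(N+1)×2(N+1) matrix 𝓛_N as the (N+1)×(N+1) block matrix with 2×2 blocks A_{ij}, where A_{ii} has rows (1, 0) and (m_{ii}, N+1), and for i ≠ j, A_{ij} has rows (0, 0) and (m_{ij}, 0). Then 𝓛_N is invertible and satisfies 𝓛_N^T P₋ 𝓛_N = P₊ (equivalently, ⟨P₋ 𝓛_N x, 𝓛_N y⟩ = ⟨P₊ x, y⟩ for all x, y ∈ ℂ^(2(N+1))). -/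
/-!
Write `P₀ = [[0, 1], [-1, 0]]`, `E = [[1, 0], [0, 0]]`, `M = (m_{ij})`. Then `P₊ = 1 ⊗ P₀` and
`𝓛_N = 1 ⊗ [[1, 0], [0, N + 1]] + M ⊗ [[0, 0], [1, 0]]`, so multiplying out the `2 × 2` factors
gives `𝓛_Nᵀ P₊ 𝓛_N = (N + 1) P₊ + (M - Mᵀ) ⊗ E`, and the last term vanishes when `M` is symmetric.
Since `P₊` is invertible, the resulting congruence makes `𝓛_N` invertible; since `𝓛_N` is real, its
transpose is its adjoint, which turns the congruence into the identity of Hermitian forms.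
-/

open scoped BigOperators
open Matrix

/-- The block matrix `𝓛_N` with diagonal `2×2` blocks `A_{ii} = [[1,0],[m_{ii}, N+1]]`
and off-diagonal blocks `A_{ij} = [[0,0],[m_{ij},0]]`. -/
noncomputable def LNmat (N : ℕ) (m : Fin (N + 1) → Fin (N + 1) → ℝ) :
    Matrix (Fin (N + 1) × Fin 2) (Fin (N + 1) × Fin 2) ℂ :=
  fun p q =>
    if p.1 = q.1 then
      (if p.2 = 0 then (if q.2 = 0 then 1 else 0)
       else (if q.2 = 0 then (m p.1 q.1 : ℂ) else ((N : ℂ) + 1)))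
    else
      (if p.2 = 1 ∧ q.2 = 0 then (m p.1 q.1 : ℂ) else 0)

open scoped Kronecker

section KroneckerForms

lemma transpose_one_kronecker_add_kronecker_mul_mul {ι κ R : Type*} [DecidableEq ι] [Fintype ι]
    [Fintype κ] [CommSemiring R] (M : Matrix ι ι R) (P D F : Matrix κ κ R) :
    (1 ⊗ₖ D + M ⊗ₖ F)ᵀ * (1 ⊗ₖ P) * (1 ⊗ₖ D + M ⊗ₖ F) =
      1 ⊗ₖ (Dᵀ * P * D) + M ⊗ₖ (Dᵀ * P * F) + Mᵀ ⊗ₖ (Fᵀ * P * D) +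
        (Mᵀ * M) ⊗ₖ (Fᵀ * P * F) := by
  simp only [Matrix.transpose_add, ← Matrix.kroneckerMap_transpose, Matrix.transpose_one,
    add_mul, mul_add, ← Matrix.mul_kronecker_mul, one_mul, mul_one]
  abel

variable {ι R : Type*} [DecidableEq ι] [CommRing R]

/-- The matrix of the standard symplectic form on `R² ⊕ ⋯ ⊕ R²`, one hyperbolic plane for each
element of `ι`; it is `P₊` for `ι = Fin (N + 1)` and `R = ℂ`. -/
def blockSymplectic (ι R : Type*) [DecidableEq ι] [CommRing R] :
    Matrix (ι × Fin 2) (ι × Fin 2) R :=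
  1 ⊗ₖ !![0, 1; -1, 0]

/-- The block matrix with diagonal blocks `[[1, 0], [M i i, c]]` and off-diagonal blocks
`[[0, 0], [M i j, 0]]`: the shape of the vertex condition `𝓛_N`, with couplings `M` and
scale `c`. -/
def couplingMatrix (M : Matrix ι ι R) (c : R) : Matrix (ι × Fin 2) (ι × Fin 2) R :=
  1 ⊗ₖ !![1, 0; 0, c] + M ⊗ₖ !![0, 0; 1, 0]

variable [Fintype ι]

lemma isUnit_blockSymplectic : IsUnit (blockSymplectic ι R) := by
  rw [Matrix.isUnit_iff_isUnit_det, blockSymplectic, Matrix.det_kronecker]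
  simp [Matrix.det_fin_two_of]

lemma transpose_couplingMatrix_mul_blockSymplectic_mul (M : Matrix ι ι R) (c : R) :
    (couplingMatrix M c)ᵀ * blockSymplectic ι R * couplingMatrix M c =
      c • blockSymplectic ι R + (M - Mᵀ) ⊗ₖ !![1, 0; 0, 0] := by
  have diagonal_term : !![1, 0; 0, c]ᵀ * !![0, 1; -1, 0] * !![1, 0; 0, c] =
      c • !![0, 1; -1, 0] := by
    simp [← Matrix.ext_iff, Matrix.mul_apply]
  have cross_term : !![1, 0; 0, c]ᵀ * !![0, 1; -1, 0] * !![0, 0; 1, 0] = !![1, 0; 0, 0] := by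
    simp [← Matrix.ext_iff, Matrix.mul_apply]
  have transposed_cross_term :
      !![0, 0; 1, 0]ᵀ * !![0, 1; -1, 0] * !![1, 0; 0, c] = -!![1, 0; 0, 0] := by
    simp [← Matrix.ext_iff, Matrix.mul_apply]
  have coupling_term :
      !![0, 0; 1, 0]ᵀ * !![0, 1; -1, 0] * !![0, 0; 1, 0] = (0 : Matrix (Fin 2) (Fin 2) R) := by
    simp [← Matrix.ext_iff, Matrix.mul_apply]
  rw [couplingMatrix, blockSymplectic, transpose_one_kronecker_add_kronecker_mul_mul,
    diagonal_term, cross_term, transposed_cross_term, coupling_term, Matrix.kronecker_zero,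
    Matrix.kronecker_smul, add_zero, add_assoc]
  congr 1
  ext ⟨i, a⟩ ⟨j, b⟩
  simp only [Matrix.add_apply, Matrix.kronecker_apply, Matrix.neg_apply, Matrix.sub_apply]
  ring

lemma transpose_couplingMatrix_mul_blockSymplectic_mul_of_isSymm {M : Matrix ι ι R}
    (hM : M.IsSymm) (c : R) :
    (couplingMatrix M c)ᵀ * blockSymplectic ι R * couplingMatrix M c = c • blockSymplectic ι R := by
  rw [transpose_couplingMatrix_mul_blockSymplectic_mul, hM.eq, sub_self, Matrix.zero_kronecker,
    add_zero]

end KroneckerForms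

lemma herm_mulVec_right {ι κ : Type*} [Fintype ι] [Fintype κ] (A : Matrix κ ι ℂ) (x : κ → ℂ)
    (y : ι → ℂ) : herm x (A *ᵥ y) = herm (Aᴴ *ᵥ x) y := by
  change x ⬝ᵥ star (A *ᵥ y) = (Aᴴ *ᵥ x) ⬝ᵥ star y
  rw [Matrix.star_mulVec, dotProduct_comm, ← Matrix.dotProduct_mulVec, dotProduct_comm]

lemma Pplus_eq_blockSymplectic (N : ℕ) : Pplus N = blockSymplectic (Fin (N + 1)) ℂ := by
  ext ⟨i, a⟩ ⟨j, b⟩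
  fin_cases a <;> fin_cases b <;> simp [Pplus, blockSymplectic, Matrix.one_apply, neg_ite]

lemma LNmat_eq_couplingMatrix (N : ℕ) (m : Fin (N + 1) → Fin (N + 1) → ℝ) :
    LNmat N m = couplingMatrix ((Matrix.of m).map Complex.ofReal) ((N : ℂ) + 1) := by
  ext ⟨i, a⟩ ⟨j, b⟩
  fin_cases a <;> fin_cases b <;> simp [LNmat, couplingMatrix, Matrix.one_apply]

lemma conjTranspose_LNmat (N : ℕ) (m : Fin (N + 1) → Fin (N + 1) → ℝ) :
    (LNmat N m)ᴴ = (LNmat N m)ᵀ := by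
  ext p q
  simp only [Matrix.conjTranspose_apply, Matrix.transpose_apply, LNmat]
  split_ifs <;> simp

lemma transpose_LNmat_mul_Pminus_mul {N : ℕ} {m : Fin (N + 1) → Fin (N + 1) → ℝ}
    (hm : ∀ i j, m i j = m j i) :
    (LNmat N m)ᵀ * Pminus N * LNmat N m = Pplus N := by
  have symm : ((Matrix.of m).map Complex.ofReal).IsSymm :=
    Matrix.IsSymm.ext fun i j => congrArg Complex.ofReal (hm j i)
  rw [Pminus, Matrix.mul_smul, Matrix.smul_mul, Pplus_eq_blockSymplectic, LNmat_eq_couplingMatrix,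
    transpose_couplingMatrix_mul_blockSymplectic_mul_of_isSymm symm,
    inv_smul_smul₀ (Nat.cast_add_one_ne_zero N)]

/-- For symmetric real parameters `m_{ij}`, the matrix `𝓛_N` is
invertible and satisfies `𝓛_Nᵀ P₋ 𝓛_N = P₊`, equivalently
`⟨P₋ 𝓛_N x, 𝓛_N y⟩ = ⟨P₊ x, y⟩` for all `x, y ∈ ℂ^(2(N+1))`. -/
theorem LN_is_unitary (N : ℕ) (hN : 1 ≤ N) (m : Fin (N + 1) → Fin (N + 1) → ℝ)
    (hm : ∀ i j, m i j = m j i) :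
    IsUnit (LNmat N m) ∧
    (LNmat N m)ᵀ * Pminus N * LNmat N m = Pplus N ∧
    ∀ x y : Fin (N + 1) × Fin 2 → ℂ,
      herm ((Pminus N).mulVec ((LNmat N m).mulVec x)) ((LNmat N m).mulVec y)
        = herm ((Pplus N).mulVec x) y := by
  have congruence := transpose_LNmat_mul_Pminus_mul hm
  refine ⟨?_, congruence, fun x y => ?_⟩
  · have isUnit_Pplus : IsUnit (Pplus N) :=
      Pplus_eq_blockSymplectic N ▸ isUnit_blockSymplectic
    exact isUnit_of_mul_isUnit_right (congruence ▸ isUnit_Pplus)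
  · rw [herm_mulVec_right, conjTranspose_LNmat, Matrix.mulVec_mulVec, Matrix.mulVec_mulVec,
      congruence]
end

section
/- Let N ≥ 1 and let m_{ij} ∈ ℝ for i,j ∈ {1,…,N+1} satisfy m_{ij} = m_{ji}. Let 𝓛_N be the (N+1)×(N+1) block matrix with 2×2 blocks A_{ij}, where A_{ii} has rows (1, 0) and (m_{ii}, N+1), and for i ≠ j, A_{ij} has rows (0, 0) and (m_{ij}, 0). Let a, a', b, b', c₁, c₁', …, c_N, c_N' ∈ ℂ and suppose 𝓛_N·(a, a', c₁, c₁', …, c_N, c_N')^T = (b, b', b, b', …, b, b')^T (with N+1 copies of (b, b')). Then a = b = c₁ = ⋯ = c_N and b' − a' = Σ_{j=1}^{N} cⱼ' + (1/(N+1))·(Σ_{i,j=1}^{N+1} m_{ij})·a. In particular, interpreting a = φ(−L), a' = φ'(−L), b = φ(L), b' = φ'(L), cⱼ = ψⱼ(L), cⱼ' = ψⱼ'(L), the boundary equations of 𝓛_N are exactly the δ-type conditions φ(−L) = φ(L) = ψ₁(L) = ⋯ = ψ_N(L) and φ'(L) − φ'(−L) = Σⱼ ψⱼ'(L) + Z·φ(−L)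 with Z = (1/(N+1))·Σ_{i,j} m_{ij}. -/
/-! The matrix `𝓛_N` is `1 ⊗ diag(1, N + 1) + M ⊗ E₂₁`. The rows `(i, 0)` say that all boundary
values equal `b`; the rows `(i, 1)` then read `(N + 1) v'ᵢ + (∑ j, m i j) b = b'`, and summing them
over the `N + 1` indices `i` and dividing by `N + 1` gives the jump condition on the derivatives. -/

open scoped BigOperators
open Matrix

/-- The vector `(a, a', c₁, c₁', …, c_N, c_N')`. -/
noncomputable def bvec {N : ℕ} (a a' : ℂ) (c c' : Fin N → ℂ) :
    Fin (N + 1) × Fin 2 → ℂ := fun p =>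
  Fin.cases (motive := fun _ => Fin 2 → ℂ)
    (fun α => if α = 0 then a else a')
    (fun k α => if α = 0 then c k else c' k) p.1 p.2

section BoundarySystem

open scoped Kronecker

variable {ι R K : Type*} [Fintype ι] [DecidableEq ι] [CommSemiring R] [Field K]

/-- The matrix of a vertex boundary system, acting on `ι`-indexed pairs (boundary value,
boundary derivative): values are kept, derivatives are scaled by `κ`, and the coupling `M` feeds the
values into the derivative rows. The paper's `𝓛_N` is the case `κ = N + 1 = card ι`. -/
def boundaryMatrix (κ : R) (M : Matrix ι ι R) : Matrix (ι × Fin 2) (ι × Fin 2) R :=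
  1 ⊗ₖ !![1, 0; 0, κ] + M ⊗ₖ !![0, 0; 1, 0]

theorem boundaryMatrix_mulVec_zero (κ : R) (M : Matrix ι ι R) (v : ι × Fin 2 → R) (i : ι) :
    (boundaryMatrix κ M *ᵥ v) (i, 0) = v (i, 0) := by
  simp [boundaryMatrix, mulVec, dotProduct, Fintype.sum_prod_type, one_apply]

theorem boundaryMatrix_mulVec_one (κ : R) (M : Matrix ι ι R) (v : ι × Fin 2 → R) (i : ι) :
    (boundaryMatrix κ M *ᵥ v) (i, 1) = κ * v (i, 1) + ∑ j, M i j * v (j, 0) := by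
  simp [boundaryMatrix, mulVec, dotProduct, Fintype.sum_prod_type, one_apply,
    Finset.sum_add_distrib, add_comm]

theorem boundaryMatrix_mulVec_eq_iff {κ : R} {M : Matrix ι ι R} {v : ι × Fin 2 → R} {b b' : R} :
    boundaryMatrix κ M *ᵥ v = (fun p => if p.2 = 0 then b else b') ↔
      (∀ i, v (i, 0) = b) ∧ ∀ i, κ * v (i, 1) + (∑ j, M i j) * b = b' := by
  simp only [funext_iff, Prod.forall, Fin.forall_fin_two, forall_and, boundaryMatrix_mulVec_zero,
    boundaryMatrix_mulVec_one, if_true, one_ne_zero, if_false, Finset.sum_mul]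
  exact and_congr_right fun hv => by simp only [hv]

theorem LN_boundary_conditions_general (hι : (Fintype.card ι : K) ≠ 0) {M : Matrix ι ι K}
    {v : ι × Fin 2 → K} {b b' : K}
    (hrel : boundaryMatrix (Fintype.card ι : K) M *ᵥ v = fun p => if p.2 = 0 then b else b') :
    (∀ i, v (i, 0) = b) ∧
      b' = ∑ i, v (i, 1) + ((∑ i, ∑ j, M i j) / (Fintype.card ι : K)) * b := by
  obtain ⟨hvalue, hderiv⟩ := boundaryMatrix_mulVec_eq_iff.1 hrel
  have hsum : Fintype.card ι * ∑ i, v (i, 1) + (∑ i, ∑ j, M i j) * b = Fintype.card ι * b' :=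
    calc Fintype.card ι * ∑ i, v (i, 1) + (∑ i, ∑ j, M i j) * b
        = ∑ i, (Fintype.card ι * v (i, 1) + (∑ j, M i j) * b) := by
          rw [Finset.sum_add_distrib, Finset.mul_sum, Finset.sum_mul]
      _ = ∑ _i : ι, b' := Finset.sum_congr rfl fun i _ => hderiv i
      _ = Fintype.card ι * b' := by simp
  refine ⟨hvalue, ?_⟩
  field_simp
  linear_combination -hsum

end BoundarySystem

theorem LNmat_eq_boundaryMatrix (N : ℕ) (m : Fin (N + 1) → Fin (N + 1) → ℝ) :
    LNmat N m =
      boundaryMatrix (Fintype.card (Fin (N + 1)) : ℂ) (of fun i j => (m i j : ℂ)) := by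
  ext ⟨i, α⟩ ⟨j, β⟩
  fin_cases α <;> fin_cases β <;> simp [LNmat, boundaryMatrix, one_apply]

theorem forall_bvec_zero_eq_iff {N : ℕ} {a a' b : ℂ} {c c' : Fin N → ℂ} :
    (∀ i, bvec a a' c c' (i, 0) = b) ↔ a = b ∧ ∀ k, c k = b := by
  simp [Fin.forall_fin_succ, bvec]

theorem sum_bvec_one {N : ℕ} (a a' : ℂ) (c c' : Fin N → ℂ) :
    ∑ i, bvec a a' c c' (i, 1) = a' + ∑ k, c' k := by
  simp [Fin.sum_univ_succ, bvec]

/-- If `𝓛_N (a, a', c₁, c₁', …, c_N, c_N')ᵀ = (b, b', …, b, b')ᵀ`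
then `a = b = c₁ = ⋯ = c_N` and
`b' − a' = Σⱼ cⱼ' + (1/(N+1))(Σ_{i,j} m_{ij})·a`, i.e. the boundary equations of
`𝓛_N` are exactly the δ-type vertex conditions with `Z = (Σ_{i,j} m_{ij})/(N+1)`. -/
theorem LN_boundary_conditions (N : ℕ) (hN : 1 ≤ N)
    (m : Fin (N + 1) → Fin (N + 1) → ℝ) (hm : ∀ i j, m i j = m j i)
    (a a' b b' : ℂ) (c c' : Fin N → ℂ)
    (hrel : (LNmat N m).mulVec (bvec a a' c c')
      = fun p : Fin (N + 1) × Fin 2 => if p.2 = 0 then b else b') :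
    a = b ∧ (∀ k : Fin N, c k = b) ∧
    b' - a' = (∑ k : Fin N, c' k)
      + ((∑ i : Fin (N + 1), ∑ j : Fin (N + 1), (m i j : ℂ)) / ((N : ℂ) + 1)) * a := by
  obtain ⟨hvalue, hjump⟩ := LN_boundary_conditions_general (Nat.cast_ne_zero.2 Fintype.card_ne_zero)
    (LNmat_eq_boundaryMatrix N m ▸ hrel)
  obtain ⟨rfl, hc⟩ := forall_bvec_zero_eq_iff.1 hvalue
  exact ⟨rfl, hc, by simpa [sum_bvec_one, sub_eq_iff_eq_add', add_assoc] using hjump⟩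
end

section
/- Let L > 0, ω ∈ ℝ, and let Φ : ℝ → ℝ be twice continuously differentiable, 2L-periodic, and strictly positive, satisfying −Φ''(x) + ω·Φ(x) − Φ(x)³ = 0 for all x ∈ ℝ. If f : ℝ → ℝ is twice continuously differentiable, 2L-periodic, and satisfies the linearized equation −f''(x) + ω·f(x) − Φ(x)²·f(x) = 0 for all x ∈ ℝ, then there exists c ∈ ℝ such that f = c·Φ. -/
/-!
The Wronskian `W` of the positive solution `Φ` and of `f` is constant because both solve the same
Hill equation, and `f / Φ` has derivative `W / Φ²`. Since `f / Φ` is periodic, Rolle's theorem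
forces `W = 0`, so `f / Φ` is constant. Continuous linear functionals reduce the case of
vector-valued `f` to Rolle's theorem for real functions.
-/

section Wronskian

variable {𝕜 E : Type*} [NontriviallyNormedField 𝕜] [NormedAddCommGroup E] [NormedSpace 𝕜 E]

/-- The Wronskian `g f' - g' f` of a scalar function `g` and a vector-valued function `f`. The
functions `g'` and `f'`, meant to be the derivatives of `g` and `f`, are explicit arguments. -/
def wronskian (g g' : 𝕜 → 𝕜) (f f' : 𝕜 → E) (x : 𝕜) : E :=
  g x • f' x - g' x • f x

variable {g g' : 𝕜 → 𝕜} {f f' : 𝕜 → E} {x : 𝕜}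

theorem hasDerivAt_wronskian {g'' : 𝕜} {f'' : E}
    (hg : HasDerivAt g (g' x) x) (hg' : HasDerivAt g' g'' x)
    (hf : HasDerivAt f (f' x) x) (hf' : HasDerivAt f' f'' x) :
    HasDerivAt (wronskian g g' f f') (g x • f'' - g'' • f x) x :=
  ((hg.smul hf').sub (hg'.smul hf)).congr_deriv (by module)

theorem hasDerivAt_inv_smul_wronskian
    (hg : HasDerivAt g (g' x) x) (hf : HasDerivAt f (f' x) x) (hgx : g x ≠ 0) :
    HasDerivAt (fun y ↦ (g y)⁻¹ • f y) ((g x ^ 2)⁻¹ • wronskian g g' f f' x) x := by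
  refine ((hg.fun_inv hgx).smul hf).congr_deriv ?_
  have inv_eq : (g x)⁻¹ = (g x ^ 2)⁻¹ * g x := by field_simp
  rw [wronskian, inv_eq]
  module

end Wronskian

section Hill

variable {𝕜 E : Type*} [NontriviallyNormedField 𝕜] [NormedAddCommGroup E] [NormedSpace 𝕜 E]

/-- The function `y`, with derivative `y'`, solves Hill's equation `y'' = q y`. No regularity or
periodicity of the potential `q` is part of the definition. -/
structure IsHillSolution (q : 𝕜 → 𝕜) (y y' : 𝕜 → E) : Prop where
  hasDerivAt : ∀ x, HasDerivAt y (y' x) x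
  hasDerivAt_deriv : ∀ x, HasDerivAt y' (q x • y x) x

variable {q g g' : 𝕜 → 𝕜} {f f' : 𝕜 → E}

theorem IsHillSolution.hasDerivAt_wronskian_zero
    (hg : IsHillSolution q g g') (hf : IsHillSolution q f f') (x : 𝕜) :
    HasDerivAt (wronskian g g' f f') 0 x :=
  (hasDerivAt_wronskian (hg.hasDerivAt x) (hg.hasDerivAt_deriv x)
    (hf.hasDerivAt x) (hf.hasDerivAt_deriv x)).congr_deriv (by rw [smul_eq_mul]; module)

end Hill

section RCLike

variable {𝕜 E : Type*} [RCLike 𝕜] [NormedAddCommGroup E] [NormedSpace 𝕜 E]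
  {g g' : 𝕜 → 𝕜} {f f' : 𝕜 → E}

theorem IsHillSolution.wronskian_eq {q : 𝕜 → 𝕜}
    (hg : IsHillSolution q g g') (hf : IsHillSolution q f f') (x y : 𝕜) :
    wronskian g g' f f' x = wronskian g g' f f' y :=
  is_const_of_deriv_eq_zero (fun z ↦ (hg.hasDerivAt_wronskian_zero hf z).differentiableAt)
    (fun z ↦ (hg.hasDerivAt_wronskian_zero hf z).deriv) x y

theorem exists_eq_smul_of_wronskian_eq_zero
    (hg : ∀ x, HasDerivAt g (g' x) x) (hf : ∀ x, HasDerivAt f (f' x) x) (hg0 : ∀ x, g x ≠ 0)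
    (hW : ∀ x, wronskian g g' f f' x = 0) :
    ∃ c : E, ∀ x, f x = g x • c := by
  have quotient_deriv (x : 𝕜) : HasDerivAt (fun y ↦ (g y)⁻¹ • f y) 0 x := by
    simpa only [hW, smul_zero] using hasDerivAt_inv_smul_wronskian (hg x) (hf x) (hg0 x)
  have quotient_const (x : 𝕜) : (g x)⁻¹ • f x = (g 0)⁻¹ • f 0 :=
    is_const_of_deriv_eq_zero (fun y ↦ (quotient_deriv y).differentiableAt)
      (fun y ↦ (quotient_deriv y).deriv) x 0
  exact ⟨(g 0)⁻¹ • f 0, fun x ↦ (inv_smul_eq_iff₀ (hg0 x)).mp (quotient_const x)⟩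

end RCLike

section Real

variable {E : Type*} [NormedAddCommGroup E] [NormedSpace ℝ E]

theorem eq_zero_of_hasDerivAt_smul_of_eq {u : ℝ → E} {h : ℝ → ℝ} {w : E} {a b : ℝ} (hab : a < b)
    (hu : ContinuousOn u (Set.Icc a b)) (hu_eq : u a = u b)
    (hu' : ∀ x ∈ Set.Ioo a b, HasDerivAt u (h x • w) x) (hh : ∀ x ∈ Set.Ioo a b, h x ≠ 0) :
    w = 0 := by
  refine SeparatingDual.eq_zero_of_forall_dual_eq_zero (R := ℝ) fun φ ↦ ?_
  obtain ⟨ξ, hξ, φ_deriv_eq_zero⟩ : ∃ ξ ∈ Set.Ioo a b, φ (h ξ • w) = 0 :=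
    exists_hasDerivAt_eq_zero hab (φ.continuous.comp_continuousOn hu) (congrArg φ hu_eq)
      fun x hx ↦ φ.hasFDerivAt.comp_hasDerivAt x (hu' x hx)
  rw [map_smul, smul_eq_mul] at φ_deriv_eq_zero
  exact (mul_eq_zero.mp φ_deriv_eq_zero).resolve_left (hh ξ hξ)

variable {q g g' : ℝ → ℝ} {f f' : ℝ → E}

theorem IsHillSolution.wronskian_eq_zero_of_inv_smul_eq
    (hg : IsHillSolution q g g') (hf : IsHillSolution q f f') {a b : ℝ} (hab : a < b)
    (hg0 : ∀ x ∈ Set.Icc a b, g x ≠ 0) (quotient_eq : (g a)⁻¹ • f a = (g b)⁻¹ • f b) (x : ℝ) :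
    wronskian g g' f f' x = 0 := by
  have quotient_deriv (y : ℝ) (hy : y ∈ Set.Icc a b) :
      HasDerivAt (fun z ↦ (g z)⁻¹ • f z) ((g y ^ 2)⁻¹ • wronskian g g' f f' x) y := by
    rw [hg.wronskian_eq hf x y]
    exact hasDerivAt_inv_smul_wronskian (hg.hasDerivAt y) (hf.hasDerivAt y) (hg0 y hy)
  exact eq_zero_of_hasDerivAt_smul_of_eq hab
    (fun y hy ↦ (quotient_deriv y hy).continuousAt.continuousWithinAt) quotient_eq
    (fun y hy ↦ quotient_deriv y (Set.Ioo_subset_Icc_self hy))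
    fun y hy ↦ inv_ne_zero (pow_ne_zero 2 (hg0 y (Set.Ioo_subset_Icc_self hy)))

theorem periodic_kernel_is_span_of_positive_solution_general {T : ℝ} (hT : 0 < T)
    (hg : IsHillSolution q g g') (hgT : Function.Periodic g T) (hg0 : ∀ x, g x ≠ 0)
    (hf : IsHillSolution q f f') (hfT : Function.Periodic f T) :
    ∃ c : E, ∀ x, f x = g x • c := by
  have quotient_eq : (g 0)⁻¹ • f 0 = (g T)⁻¹ • f T := by rw [hgT.eq, hfT.eq]
  exact exists_eq_smul_of_wronskian_eq_zero hg.hasDerivAt hf.hasDerivAt hg0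
    (hg.wronskian_eq_zero_of_inv_smul_eq hf hT (fun x _ ↦ hg0 x) quotient_eq)

end Real

/-- (Floquet-theory fact.) Let `Φ : ℝ → ℝ` be a twice continuously
differentiable, `2L`-periodic, strictly positive solution of the stationary cubic NLS
equation `−Φ'' + ωΦ − Φ³ = 0`. Then every twice continuously differentiable,
`2L`-periodic solution `f` of the linearized equation `−f'' + ωf − Φ²f = 0` is a
constant multiple of `Φ`. -/
theorem periodic_kernel_is_span_of_positive_solution
    (L : ℝ) (hL : 0 < L) (ω : ℝ) (Φ Φd Φdd f fd fdd : ℝ → ℝ)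
    (hΦ : ∀ x, HasDerivAt Φ (Φd x) x)
    (hΦd : ∀ x, HasDerivAt Φd (Φdd x) x)
    (hΦdd : Continuous Φdd)
    (hΦper : ∀ x, Φ (x + 2 * L) = Φ x)
    (hΦpos : ∀ x, 0 < Φ x)
    (hΦode : ∀ x, -Φdd x + ω * Φ x - (Φ x) ^ 3 = 0)
    (hf : ∀ x, HasDerivAt f (fd x) x)
    (hfd : ∀ x, HasDerivAt fd (fdd x) x)
    (hfdd : Continuous fdd)
    (hfper : ∀ x, f (x + 2 * L) = f x)
    (hfode : ∀ x, -fdd x + ω * f x - (Φ x) ^ 2 * f x = 0) :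
    ∃ c : ℝ, ∀ x, f x = c * Φ x := by
  have Φ_sol : IsHillSolution (fun x ↦ ω - Φ x ^ 2) Φ Φd :=
    ⟨hΦ, fun x ↦ (hΦd x).congr_deriv (by rw [smul_eq_mul]; linear_combination -hΦode x)⟩
  have f_sol : IsHillSolution (fun x ↦ ω - Φ x ^ 2) f fd :=
    ⟨hf, fun x ↦ (hfd x).congr_deriv (by rw [smul_eq_mul]; linear_combination -hfode x)⟩
  simpa only [smul_eq_mul, mul_comm] using
    periodic_kernel_is_span_of_positive_solution_general (by positivity : 0 < 2 * L)
      Φ_sol hΦper (fun x ↦ (hΦpos x).ne') f_sol hfper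
end

section
/- Let L > 0, let N be a positive integer, let Z < 0, and let ω > N²/Z². Define Ψ(x) = √(2ω)·sech(√ω·(x−L) + arctanh(−N/(Z·√ω))) for x ≥ L, where sech t = 1/cosh t. Then Ψ is twice continuously differentiable on [L,∞), strictly positive, square-integrable on (L,∞), satisfies −Ψ''(x) + ω·Ψ(x) − Ψ(x)³ = 0 for all x ≥ L, and satisfies the vertex condition N·Ψ(L) = Z·Ψ'(L). -/
/-!
Since `sech' = -tanh · sech` and `tanh' = sech²`, the soliton `ψ(x) = √(2ω) sech (√ω (x - L) + a)`
has logarithmic derivative `-√ω tanh (√ω (x - L) + a)`. Differentiating once more gives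
`ψ'' = ω (tanh² - sech²) ψ = ω ψ - 2ω sech² ψ = ω ψ - ψ³`, for every phase `a`. The vertex
condition only involves the logarithmic derivative `-√ω tanh a` at `L`, and choosing
`a = arctanh (-N / (Z √ω))` makes it equal to `N / Z`. Square-integrability follows from
`cosh² t = 1 + sinh² t ≥ 1 + t²`.
-/

open Set MeasureTheory

/-- The inverse hyperbolic tangent, `arctanh y = (1/2)·log((1+y)/(1−y))`. -/
noncomputable def arctanh (y : ℝ) : ℝ := (1 / 2) * Real.log ((1 + y) / (1 - y))

/-- The tail-soliton profile
`Ψ(x) = √(2ω)·sech(√ω·(x−L) + arctanh(−N/(Z·√ω)))`, where `sech t = 1/cosh t`. -/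
noncomputable def tailProfile (L ω Z : ℝ) (N : ℕ) : ℝ → ℝ := fun x =>
  Real.sqrt (2 * ω) *
    (1 / Real.cosh (Real.sqrt ω * (x - L) + arctanh (-(N : ℝ) / (Z * Real.sqrt ω))))

/-- The hyperbolic secant. -/
noncomputable def sech (t : ℝ) : ℝ := 1 / Real.cosh t

lemma sech_pos (t : ℝ) : 0 < sech t :=
  one_div_pos.2 (Real.cosh_pos t)

lemma contDiff_sech {n : WithTop ℕ∞} : ContDiff ℝ n sech :=
  contDiff_const.div Real.contDiff_cosh fun t ↦ (Real.cosh_pos t).ne'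

lemma tanh_sq_add_sech_sq (t : ℝ) : Real.tanh t ^ 2 + sech t ^ 2 = 1 := by
  have hcosh := (Real.cosh_pos t).ne'
  rw [Real.tanh_eq_sinh_div_cosh, sech]
  field_simp
  exact (Real.cosh_sq t).symm

lemma hasDerivAt_sech (t : ℝ) : HasDerivAt sech (-(Real.tanh t * sech t)) t := by
  refine ((hasDerivAt_const t 1).div (Real.hasDerivAt_cosh t)
    (Real.cosh_pos t).ne').congr_deriv ?_
  rw [Real.tanh_eq_sinh_div_cosh, sech]
  ring

lemma hasDerivAt_tanh (t : ℝ) : HasDerivAt Real.tanh (sech t ^ 2) t := by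
  rw [funext Real.tanh_eq_sinh_div_cosh]
  refine ((Real.hasDerivAt_sinh t).div (Real.hasDerivAt_cosh t)
    (Real.cosh_pos t).ne').congr_deriv ?_
  rw [sech, div_pow, one_pow, ← Real.cosh_sq_sub_sinh_sq t, sq, sq]

lemma sech_sq_le (t : ℝ) : sech t ^ 2 ≤ (1 + t ^ 2)⁻¹ := by
  have habs : |t| ≤ |Real.sinh t| := by
    rw [Real.abs_sinh]
    exact Real.self_le_sinh_iff.2 (abs_nonneg t)
  rw [sech, one_div, inv_pow, Real.cosh_sq']
  gcongr 1
  exact add_le_add_right (sq_le_sq.2 habs) 1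

lemma integrable_sech_sq : Integrable fun t ↦ sech t ^ 2 := by
  refine integrable_inv_one_add_sq.mono'
    ((contDiff_sech (n := 0)).continuous.pow 2).aestronglyMeasurable (ae_of_all _ fun t ↦ ?_)
  rw [Real.norm_of_nonneg (sq_nonneg _)]
  exact sech_sq_le t

lemma tanh_arctanh {y : ℝ} (hy : y ∈ Ioo (-1) 1) : Real.tanh (arctanh y) = y := by
  rw [arctanh, ← Real.artanh_eq_half_log (Ioo_subset_Icc_self hy), Real.tanh_artanh hy]

lemma hasDerivAt_mul_sub_add (s L a x : ℝ) : HasDerivAt (fun x ↦ s * (x - L) + a) s x := by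
  simpa using (((hasDerivAt_id x).sub_const L).const_mul s).add_const a

/-- The bright soliton of frequency `ω` for the cubic nonlinear Schrödinger equation on the line.
It is parametrized by its phase `a` at the base point `L`, so its peak is at `L - a / √ω`. -/
noncomputable def soliton (ω L a x : ℝ) : ℝ :=
  √(2 * ω) * sech (√ω * (x - L) + a)

section Soliton

variable (ω L a x : ℝ)

lemma contDiff_soliton {n : WithTop ℕ∞} : ContDiff ℝ n (soliton ω L a) :=
  contDiff_const.mul (contDiff_sech.comp (by fun_prop : ContDiff ℝ n fun x ↦ √ω * (x - L) + a))

lemma hasDerivAt_soliton :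
    HasDerivAt (soliton ω L a) (-√ω * Real.tanh (√ω * (x - L) + a) * soliton ω L a x) x := by
  have hsech := (hasDerivAt_sech _).comp x (hasDerivAt_mul_sub_add √ω L a x)
  refine (hsech.const_mul √(2 * ω)).congr_deriv ?_
  rw [soliton]
  ring

lemma deriv_soliton :
    deriv (soliton ω L a) = fun x ↦ -√ω * Real.tanh (√ω * (x - L) + a) * soliton ω L a x :=
  funext fun x ↦ (hasDerivAt_soliton ω L a x).deriv

lemma deriv_soliton_base : deriv (soliton ω L a) L = -√ω * Real.tanh a * soliton ω L a L := by
  simp only [deriv_soliton, sub_self, mul_zero, zero_add]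

variable {ω}

lemma soliton_pos (hω : 0 < ω) : 0 < soliton ω L a x :=
  mul_pos (Real.sqrt_pos.2 (by positivity)) (sech_pos _)

lemma integrable_soliton_sq (hω : 0 < ω) : Integrable fun x ↦ soliton ω L a x ^ 2 := by
  have hsech : Integrable fun x ↦ sech (√ω * (x - L) + a) ^ 2 :=
    ((integrable_sech_sq.comp_add_right a).comp_mul_left' (Real.sqrt_pos.2 hω).ne').comp_sub_right L
  simpa only [soliton, mul_pow] using hsech.const_mul (√(2 * ω) ^ 2)

lemma soliton_sq (hω : 0 ≤ ω) : soliton ω L a x ^ 2 = 2 * ω * sech (√ω * (x - L) + a) ^ 2 := by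
  rw [soliton, mul_pow, Real.sq_sqrt (by positivity)]

lemma deriv_deriv_soliton (hω : 0 ≤ ω) :
    deriv (deriv (soliton ω L a)) x = ω * soliton ω L a x - soliton ω L a x ^ 3 := by
  have htanh := (hasDerivAt_tanh _).comp x (hasDerivAt_mul_sub_add √ω L a x)
  have hderiv := ((htanh.const_mul (-√ω)).mul (hasDerivAt_soliton ω L a x)).deriv
  have hsq := soliton_sq L a x hω
  have hone := tanh_sq_add_sech_sq (√ω * (x - L) + a)
  rw [deriv_soliton]
  refine hderiv.trans ?_
  simp only [Function.comp_apply]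
  generalize √ω * (x - L) + a = θ at hsq hone ⊢
  generalize soliton ω L a x = ψ at hsq ⊢
  calc -√ω * (sech θ ^ 2 * √ω) * ψ + -√ω * Real.tanh θ * (-√ω * Real.tanh θ * ψ)
      = √ω ^ 2 * (Real.tanh θ ^ 2 - sech θ ^ 2) * ψ := by ring
    _ = ω * (1 - 2 * sech θ ^ 2) * ψ := by
        rw [Real.sq_sqrt hω, ← hone]
        ring
    _ = ω * ψ - 2 * ω * sech θ ^ 2 * ψ := by ring
    _ = ω * ψ - ψ ^ 3 := by
        rw [← hsq]
        ring

end Soliton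

lemma pos_of_sq_div_sq_lt {c Z ω : ℝ} (hω : c ^ 2 / Z ^ 2 < ω) : 0 < ω :=
  lt_of_le_of_lt (by positivity) hω

lemma neg_div_mul_sqrt_mem_Ioo {c Z ω : ℝ} (hω : c ^ 2 / Z ^ 2 < ω) :
    -c / (Z * √ω) ∈ Ioo (-1) 1 := by
  have hω_pos : 0 < ω := pos_of_sq_div_sq_lt hω
  rw [mem_Ioo, ← abs_lt, ← sq_lt_one_iff_abs_lt_one]
  calc (-c / (Z * √ω)) ^ 2 = c ^ 2 / Z ^ 2 / ω := by
        rw [div_pow, neg_sq, mul_pow, Real.sq_sqrt hω_pos.le, div_div]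
    _ < 1 := (div_lt_one hω_pos).2 hω

lemma soliton_vertex_condition {c Z ω : ℝ} (L : ℝ) (hZ : Z ≠ 0) (hω : c ^ 2 / Z ^ 2 < ω) :
    c * soliton ω L (arctanh (-c / (Z * √ω))) L =
      Z * deriv (soliton ω L (arctanh (-c / (Z * √ω)))) L := by
  have hsqrt : √ω ≠ 0 := (Real.sqrt_pos.2 (pos_of_sq_div_sq_lt hω)).ne'
  rw [deriv_soliton_base, tanh_arctanh (neg_div_mul_sqrt_mem_Ioo hω)]
  field_simp

lemma tailProfile_eq_soliton (L ω Z : ℝ) (N : ℕ) :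
    tailProfile L ω Z N = soliton ω L (arctanh (-(N : ℝ) / (Z * √ω))) :=
  rfl

theorem tailProfile_properties_general (L : ℝ) (N : ℕ) {Z ω : ℝ} (hZ : Z ≠ 0)
    (hω : (N : ℝ) ^ 2 / Z ^ 2 < ω) :
    (∀ n : WithTop ℕ∞, ContDiff ℝ n (tailProfile L ω Z N)) ∧
    (∀ x, 0 < tailProfile L ω Z N x) ∧
    Integrable (fun x ↦ tailProfile L ω Z N x ^ 2) ∧
    (∀ x, -(deriv (deriv (tailProfile L ω Z N)) x) + ω * tailProfile L ω Z N x
      - tailProfile L ω Z N x ^ 3 = 0) ∧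
    (N : ℝ) * tailProfile L ω Z N L = Z * deriv (tailProfile L ω Z N) L := by
  have hω_pos : 0 < ω := pos_of_sq_div_sq_lt hω
  rw [tailProfile_eq_soliton]
  refine ⟨fun n ↦ contDiff_soliton ω L _, fun x ↦ soliton_pos L _ x hω_pos,
    integrable_soliton_sq L _ hω_pos, fun x ↦ ?_, soliton_vertex_condition L hZ hω⟩
  rw [deriv_deriv_soliton L _ x hω_pos.le]
  ring

/-- For `L > 0`, `N ≥ 1`, `Z < 0` and `ω > N²/Z²`, the profile
`Ψ = tailProfile L ω Z N` is twice continuously differentiable on `[L,∞)`, strictly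
positive, square-integrable on `(L,∞)`, solves `−Ψ'' + ωΨ − Ψ³ = 0` on `[L,∞)`, and
satisfies the vertex condition `N·Ψ(L) = Z·Ψ'(L)`. -/
theorem tailProfile_properties (L : ℝ) (hL : 0 < L) (N : ℕ) (hN : 1 ≤ N)
    (Z : ℝ) (hZ : Z < 0) (ω : ℝ) (hω : (N : ℝ) ^ 2 / Z ^ 2 < ω) :
    ContDiffOn ℝ 2 (tailProfile L ω Z N) (Ici L) ∧
    (∀ x ∈ Ici L, 0 < tailProfile L ω Z N x) ∧
    IntegrableOn (fun x => (tailProfile L ω Z N x) ^ 2) (Ioi L) ∧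
    (∀ x ∈ Ici L,
      -(deriv (deriv (tailProfile L ω Z N)) x) + ω * tailProfile L ω Z N x
        - (tailProfile L ω Z N x) ^ 3 = 0) ∧
    (N : ℝ) * tailProfile L ω Z N L = Z * deriv (tailProfile L ω Z N) L := by
  obtain ⟨hsmooth, hpos, hint, hode, hvertex⟩ := tailProfile_properties_general L N hZ.ne hω
  exact ⟨(hsmooth 2).contDiffOn, fun x _ ↦ hpos x, hint.integrableOn, fun x _ ↦ hode x, hvertex⟩
end

section
/- Let L > 0, let N be a positive integer, let Z < 0, and let ω > N²/Z². Define Ψ(x) = √(2ω)·sech(√ω·(x−L) + arctanh(−N/(Z·√ω))) for x ≥ L, where sech t = 1/cosh t. Then Ψ''(L) = 0 if and only if ω = 2N²/Z². -/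
/-!
The profile is a positive solution of the stationary cubic NLS equation `Ψ'' = ωΨ - Ψ³`, so
`Ψ''(L) = 0` exactly when `Ψ(L)² = ω`. Since `sech² (arctanh y) = 1 - y²` for `|y| < 1`, the shift
of the profile gives `Ψ(L)² = 2(ω - N²/Z²)`, and the resulting equation is linear in `ω`.
-/

open Set MeasureTheory

lemma deriv_comp_mul_sub_add {𝕜 E : Type*} [NontriviallyNormedField 𝕜] [NormedAddCommGroup E]
    [NormedSpace 𝕜 E] (f : 𝕜 → E) (k b a x : 𝕜) :
    deriv (fun x => f (k * (x - b) + a)) x = k • deriv f (k * (x - b) + a) := by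
  rw [deriv_comp_sub_const (fun y => f (k * y + a)),
    deriv_comp_mul_left k (fun y => f (y + a)), deriv_comp_add_const]

lemma deriv_one_div_cosh :
    deriv (fun x => 1 / Real.cosh x) = fun x => -Real.sinh x / Real.cosh x ^ 2 := by
  funext x
  simpa only [one_div] using ((Real.hasDerivAt_cosh x).fun_inv (Real.cosh_pos x).ne').deriv

lemma deriv_deriv_one_div_cosh (x : ℝ) :
    deriv (deriv fun x => 1 / Real.cosh x) x =
      1 / Real.cosh x - 2 * (1 / Real.cosh x) ^ 3 := by
  have hcosh : Real.cosh x ≠ 0 := (Real.cosh_pos x).ne'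
  have hderiv := ((Real.hasDerivAt_sinh x).fun_neg.fun_div
    ((Real.hasDerivAt_cosh x).fun_pow 2) (pow_ne_zero 2 hcosh)).deriv
  rw [deriv_one_div_cosh, hderiv]
  field_simp
  linear_combination 2 * Real.cosh x * Real.sinh_sq x

lemma arctanh_eq_artanh {y : ℝ} (hy : y ∈ Icc (-1) 1) : arctanh y = Real.artanh y :=
  (Real.artanh_eq_half_log hy).symm

lemma one_div_cosh_arctanh_sq {y : ℝ} (hy : y ∈ Ioo (-1) 1) :
    (1 / Real.cosh (arctanh y)) ^ 2 = 1 - y ^ 2 := by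
  have hsq : 0 ≤ 1 - y ^ 2 := sub_nonneg.2 ((sq_lt_one_iff_abs_lt_one y).2 (abs_lt.2 hy)).le
  rw [arctanh_eq_artanh (Ioo_subset_Icc_self hy), Real.cosh_artanh hy, one_div_one_div,
    Real.sq_sqrt hsq]

lemma deriv_deriv_tailProfile (L : ℝ) {ω : ℝ} (hω : 0 ≤ ω) (Z : ℝ) (N : ℕ) (x : ℝ) :
    deriv (deriv (tailProfile L ω Z N)) x =
      ω * tailProfile L ω Z N x - tailProfile L ω Z N x ^ 3 := by
  have hamp : √(2 * ω) ^ 2 = 2 * √ω ^ 2 := by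
    rw [Real.sq_sqrt (by positivity), Real.sq_sqrt hω]
  set a := arctanh (-(N : ℝ) / (Z * √ω)) with ha
  have hderiv : deriv (tailProfile L ω Z N) = fun x =>
      √(2 * ω) * (√ω * deriv (fun t => 1 / Real.cosh t) (√ω * (x - L) + a)) := by
    funext x
    unfold tailProfile
    rw [deriv_const_mul_field, deriv_comp_mul_sub_add (fun t => 1 / Real.cosh t), smul_eq_mul]
  rw [hderiv, deriv_const_mul_field, deriv_const_mul_field, deriv_comp_mul_sub_add,
    deriv_deriv_one_div_cosh, smul_eq_mul]
  simp only [tailProfile, ← ha]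
  generalize 1 / Real.cosh (√ω * (x - L) + a) = s
  linear_combination √(2 * ω) * s ^ 3 * hamp + √(2 * ω) * s * Real.sq_sqrt hω

lemma tailProfile_pos (L : ℝ) {ω : ℝ} (hω : 0 < ω) (Z : ℝ) (N : ℕ) (x : ℝ) :
    0 < tailProfile L ω Z N x :=
  mul_pos (Real.sqrt_pos.2 (mul_pos two_pos hω)) (one_div_pos.2 (Real.cosh_pos _))

lemma deriv_deriv_tailProfile_eq_zero_iff (L : ℝ) {ω : ℝ} (hω : 0 < ω) (Z : ℝ) (N : ℕ) (x : ℝ) :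
    deriv (deriv (tailProfile L ω Z N)) x = 0 ↔ tailProfile L ω Z N x ^ 2 = ω := by
  have hfactor : deriv (deriv (tailProfile L ω Z N)) x =
      tailProfile L ω Z N x * (ω - tailProfile L ω Z N x ^ 2) := by
    rw [deriv_deriv_tailProfile L hω.le]
    ring
  rw [hfactor, mul_eq_zero, or_iff_right (tailProfile_pos L hω Z N x).ne', sub_eq_zero, eq_comm]

lemma tailProfile_vertex_sq (L : ℝ) {ω Z : ℝ} {N : ℕ} (hω : (N : ℝ) ^ 2 / Z ^ 2 < ω) :
    tailProfile L ω Z N L ^ 2 = 2 * (ω - (N : ℝ) ^ 2 / Z ^ 2) := by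
  have hω₀ : 0 < ω := lt_of_le_of_lt (by positivity) hω
  have harg_sq : (-(N : ℝ) / (Z * √ω)) ^ 2 = (N : ℝ) ^ 2 / Z ^ 2 / ω := by
    rw [div_pow, neg_sq, mul_pow, Real.sq_sqrt hω₀.le, div_div]
  have harg : -(N : ℝ) / (Z * √ω) ∈ Ioo (-1) 1 := by
    rwa [mem_Ioo, ← abs_lt, ← sq_lt_one_iff_abs_lt_one, harg_sq, div_lt_one hω₀]
  calc tailProfile L ω Z N L ^ 2
      = √(2 * ω) ^ 2 * (1 / Real.cosh (arctanh (-(N : ℝ) / (Z * √ω)))) ^ 2 := by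
        simp only [tailProfile, sub_self, mul_zero, zero_add, mul_pow]
    _ = 2 * ω * (1 - (N : ℝ) ^ 2 / Z ^ 2 / ω) := by
        rw [Real.sq_sqrt (by positivity), one_div_cosh_arctanh_sq harg, harg_sq]
    _ = 2 * (ω - (N : ℝ) ^ 2 / Z ^ 2) := by
        rw [mul_assoc, mul_sub, mul_one, mul_div_cancel₀ _ hω₀.ne']

theorem tailProfile_inflection_iff_general (L : ℝ) (N : ℕ) {Z : ℝ} (hZ : Z ≠ 0) {ω : ℝ}
    (hω : (N : ℝ) ^ 2 / Z ^ 2 < ω) :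
    deriv (deriv (tailProfile L ω Z N)) L = 0 ↔ ω = 2 * (N : ℝ) ^ 2 / Z ^ 2 := by
  have hω₀ : 0 < ω := lt_of_le_of_lt (by positivity) hω
  rw [deriv_deriv_tailProfile_eq_zero_iff L hω₀, tailProfile_vertex_sq L hω]
  field_simp
  constructor <;> intro h <;> linarith

/-- For `L > 0`, `N ≥ 1`, `Z < 0` and `ω > N²/Z²`, the vertex `L` is
an inflection point of the tail-soliton profile (`Ψ''(L) = 0`) if and only if
`ω = 2N²/Z²`. -/
theorem tailProfile_inflection_iff (L : ℝ) (hL : 0 < L) (N : ℕ) (hN : 1 ≤ N)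
    (Z : ℝ) (hZ : Z < 0) (ω : ℝ) (hω : (N : ℝ) ^ 2 / Z ^ 2 < ω) :
    deriv (deriv (tailProfile L ω Z N)) L = 0 ↔ ω = 2 * (N : ℝ) ^ 2 / Z ^ 2 :=
  tailProfile_inflection_iff_general L N hZ.ne hω
end
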